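/- arXiv:2410.15852 — 2 statements merged into one kernel-verified Lean document; each statement's English description precedes it below -/
import Mathlib

section
/- For every integer n ≥ 2, o1(n-1) equals the number of partitions of n in which no odd part is repeated and the largest part is odd. (The bijection adds 1 to one copy of the largest part.) -/
/-- No even part is repeated (all even parts are distinct). -/
def EvenDistinct {n : ℕ} (p : n.Partition) : Prop :=
  ∀ i, Even i → p.parts.count i ≤ 1

/-- No odd part is repeated (all odd parts are distinct). -/
def OddDistinct {n : ℕ} (p : n.Partition) : Prop :=
  ∀ i, Odd i → p.parts.count i ≤ 1

/-- The largest part of a partition (0 for the empty partition of 0). -/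
def maxPart {n : ℕ} (p : n.Partition) : ℕ := p.parts.sup

/-- Number of partitions of n with no odd part repeated and largest part even. -/
noncomputable def o1 (n : ℕ) : ℕ :=
  Nat.card {p : n.Partition // OddDistinct p ∧ p.parts ≠ 0 ∧ Even (maxPart p)}

/-!
Raising one copy of the largest part by `1` identifies the partitions of `n ≠ 0` with the partitions
of `n + 1` whose largest part occurs exactly once; lowering the largest part is the inverse. The
only obstruction to lowering would be a largest part equal to `1`, and then the partition is
`1 + ⋯ + 1` with at least two parts, so its largest part is repeated. The map flips the parity of
the largest part, and when that part was even it creates no repeated odd part. Conversely, an odd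
largest part that is not repeated occurs exactly once.
-/

section ReplaceSup

variable {α : Type*} [LinearOrder α] [OrderBot α] {s : Multiset α} {a b i x : α}

theorem multiset_sup_mem (hs : s ≠ 0) : s.sup ∈ s := by
  obtain ⟨m, hm, hsup⟩ := Finset.exists_mem_eq_sup s.toFinset (Multiset.toFinset_nonempty.2 hs) id
  have sup_eq : s.sup = m := by
    simpa only [Finset.sup_def, Multiset.toFinset_val, Multiset.map_id, Multiset.sup_dedup,
      id_eq] using hsup
  exact sup_eq ▸ Multiset.mem_toFinset.1 hm

theorem count_eq_zero_of_sup_lt (h : s.sup < a) : s.count a = 0 :=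
  Multiset.count_eq_zero.2 fun ha => (Multiset.le_sup ha).not_gt h

theorem le_sup_of_mem_erase_sup (hx : x ∈ s.erase s.sup) : x ≤ s.sup :=
  Multiset.le_sup (Multiset.mem_of_mem_erase hx)

theorem lt_sup_of_mem_erase_sup (h : s.count s.sup = 1) (hx : x ∈ s.erase s.sup) : x < s.sup := by
  refine (le_sup_of_mem_erase_sup hx).lt_of_ne ?_
  rintro rfl
  have : (s.erase s.sup).count s.sup = 0 := by rw [Multiset.count_erase_self, h]
  exact Multiset.count_eq_zero.1 this hx

/-- The multiset `s` with one copy of its largest element replaced by `a`. For `s = 0` there is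
nothing to remove and the result is `{a}`. -/
def replaceSup (s : Multiset α) (a : α) : Multiset α := a ::ₘ s.erase s.sup

theorem replaceSup_sup (hs : s ≠ 0) : replaceSup s s.sup = s :=
  Multiset.cons_erase (multiset_sup_mem hs)

theorem sup_replaceSup (h : ∀ x ∈ s.erase s.sup, x ≤ a) : (replaceSup s a).sup = a := by
  rw [replaceSup, Multiset.sup_cons, sup_eq_left]
  exact Multiset.sup_le.2 h

theorem replaceSup_replaceSup (h : ∀ x ∈ s.erase s.sup, x ≤ a) :
    replaceSup (replaceSup s a) b = replaceSup s b := by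
  rw [replaceSup, sup_replaceSup h, replaceSup, Multiset.erase_cons_head, replaceSup]

theorem count_replaceSup_of_ne (hsup : i ≠ s.sup) (ha : i ≠ a) :
    (replaceSup s a).count i = s.count i := by
  rw [replaceSup, Multiset.count_cons_of_ne ha, Multiset.count_erase_of_ne hsup]

theorem count_replaceSup_self_of_sup_lt (h : s.sup < a) : (replaceSup s a).count a = 1 := by
  rw [replaceSup, Multiset.count_cons_self, Multiset.count_erase_of_ne h.ne',
    count_eq_zero_of_sup_lt h]

end ReplaceSup

theorem sum_replaceSup_add_sup (s : Multiset ℕ) (a : ℕ) :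
    (replaceSup s a).sum + s.sup = s.sum + a := by
  rcases eq_or_ne s 0 with rfl | hs
  · simp [replaceSup]
  · rw [replaceSup, Multiset.sum_cons, ← Multiset.sum_erase (multiset_sup_mem hs)]
    ring

section Partition

variable {n : ℕ}

theorem parts_ne_zero (hn : n ≠ 0) (p : n.Partition) : p.parts ≠ 0 := by
  intro h
  exact hn (by rw [← p.parts_sum, h, Multiset.sum_zero])

theorem pos_of_mem_replaceSup_parts (p : n.Partition) {a i : ℕ} (ha : 0 < a)
    (hi : i ∈ replaceSup p.parts a) : 0 < i := by
  rcases Multiset.mem_cons.1 hi with rfl | hi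
  · exact ha
  · exact p.parts_pos (Multiset.mem_of_mem_erase hi)

theorem sum_replaceSup_parts_add_maxPart (p : n.Partition) (a : ℕ) :
    (replaceSup p.parts a).sum + maxPart p = n + a := by
  rw [maxPart, sum_replaceSup_add_sup, p.parts_sum]

/-- The partition obtained by adding `1` to one copy of the largest part; the empty partition is
sent to the partition `1` of `1`. -/
def incrMaxPart (p : n.Partition) : (n + 1).Partition where
  parts := replaceSup p.parts (maxPart p + 1)
  parts_pos := pos_of_mem_replaceSup_parts p (Nat.succ_pos _)
  parts_sum := by
    have := sum_replaceSup_parts_add_maxPart p (maxPart p + 1)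
    omega

/-- The partition obtained by subtracting `1` from one copy of the largest part, which has to be at
least `2` for the new part to be positive. -/
def decrMaxPart (p : (n + 1).Partition) (h : 2 ≤ maxPart p) : n.Partition where
  parts := replaceSup p.parts (maxPart p - 1)
  parts_pos := pos_of_mem_replaceSup_parts p (by omega)
  parts_sum := by
    have := sum_replaceSup_parts_add_maxPart p (maxPart p - 1)
    omega

theorem le_maxPart_succ_of_mem_erase (p : n.Partition) :
    ∀ x ∈ p.parts.erase p.parts.sup, x ≤ maxPart p + 1 :=
  fun _ hx => (le_sup_of_mem_erase_sup hx).trans (Nat.le_succ _)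

theorem maxPart_incrMaxPart (p : n.Partition) : maxPart (incrMaxPart p) = maxPart p + 1 :=
  sup_replaceSup (le_maxPart_succ_of_mem_erase p)

theorem count_maxPart_incrMaxPart (p : n.Partition) :
    (incrMaxPart p).parts.count (maxPart (incrMaxPart p)) = 1 := by
  rw [maxPart_incrMaxPart]
  exact count_replaceSup_self_of_sup_lt (Nat.lt_succ_self _)

theorem two_le_maxPart (hn : 2 ≤ n) {p : n.Partition} (h : p.parts.count (maxPart p) = 1) :
    2 ≤ maxPart p := by
  have max_mem : maxPart p ∈ p.parts := multiset_sup_mem (parts_ne_zero (by omega) p)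
  rcases (p.parts.erase (maxPart p)).empty_or_exists_mem with only_max | ⟨x, hx⟩
  · have sum_eq := Multiset.sum_erase max_mem
    rw [only_max, Multiset.sum_zero, p.parts_sum] at sum_eq
    omega
  · have x_pos : 0 < x := p.parts_pos (Multiset.mem_of_mem_erase hx)
    have x_lt : x < maxPart p := lt_sup_of_mem_erase_sup h hx
    omega

theorem decrMaxPart_incrMaxPart (hn : n ≠ 0) (p : n.Partition)
    (h : 2 ≤ maxPart (incrMaxPart p)) : decrMaxPart (incrMaxPart p) h = p := by
  apply Nat.Partition.ext
  calc replaceSup (incrMaxPart p).parts (maxPart (incrMaxPart p) - 1)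
      = replaceSup (replaceSup p.parts (maxPart p + 1)) (maxPart p) := by
        rw [maxPart_incrMaxPart, Nat.add_sub_cancel, incrMaxPart]
    _ = replaceSup p.parts (maxPart p) := replaceSup_replaceSup (le_maxPart_succ_of_mem_erase p)
    _ = p.parts := replaceSup_sup (parts_ne_zero hn p)

theorem incrMaxPart_decrMaxPart {p : (n + 1).Partition} (hcount : p.parts.count (maxPart p) = 1)
    (h : 2 ≤ maxPart p) : incrMaxPart (decrMaxPart p h) = p := by
  have le_pred : ∀ x ∈ p.parts.erase p.parts.sup, x ≤ maxPart p - 1 :=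
    fun _ hx => Nat.le_sub_one_of_lt (lt_sup_of_mem_erase_sup hcount hx)
  have max_decr : maxPart (decrMaxPart p h) = maxPart p - 1 := sup_replaceSup le_pred
  apply Nat.Partition.ext
  calc replaceSup (decrMaxPart p h).parts (maxPart (decrMaxPart p h) + 1)
      = replaceSup (replaceSup p.parts (maxPart p - 1)) (maxPart p) := by
        rw [max_decr, Nat.sub_add_cancel (by omega), decrMaxPart]
    _ = replaceSup p.parts (maxPart p) := replaceSup_replaceSup le_pred
    _ = p.parts := replaceSup_sup (parts_ne_zero n.succ_ne_zero p)

/-- `incrMaxPart` as a bijection onto the partitions whose largest part occurs exactly once. -/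
def incrMaxPartEquiv (hn : n ≠ 0) :
    n.Partition ≃ {p : (n + 1).Partition // p.parts.count (maxPart p) = 1} where
  toFun p := ⟨incrMaxPart p, count_maxPart_incrMaxPart p⟩
  invFun p := decrMaxPart p.1 (two_le_maxPart (by omega) p.2)
  left_inv p := decrMaxPart_incrMaxPart hn p _
  right_inv p := Subtype.ext (incrMaxPart_decrMaxPart p.2 _)

theorem oddDistinct_incrMaxPart_iff {p : n.Partition} (hp : Even (maxPart p)) :
    OddDistinct (incrMaxPart p) ↔ OddDistinct p := by
  refine forall₂_congr fun i hi => ?_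
  rcases eq_or_ne i (maxPart p + 1) with rfl | hne
  · have count_incr : (incrMaxPart p).parts.count (maxPart p + 1) = 1 :=
      count_replaceSup_self_of_sup_lt (Nat.lt_succ_self _)
    have count_eq_zero : p.parts.count (maxPart p + 1) = 0 :=
      count_eq_zero_of_sup_lt (Nat.lt_succ_self _)
    simp only [count_incr, count_eq_zero, le_refl, zero_le]
  · have ne_max : i ≠ maxPart p := by
      rintro rfl
      exact Nat.not_even_iff_odd.2 hi hp
    rw [incrMaxPart, count_replaceSup_of_ne ne_max hne]

theorem oddDistinct_and_odd_maxPart_incrMaxPart_iff {p : n.Partition} :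
    OddDistinct (incrMaxPart p) ∧ Odd (maxPart (incrMaxPart p)) ↔
      OddDistinct p ∧ Even (maxPart p) := by
  rw [maxPart_incrMaxPart, Nat.odd_add_one, Nat.not_odd_iff_even]
  exact and_congr_left oddDistinct_incrMaxPart_iff

theorem count_maxPart_eq_one {p : n.Partition} (hp : OddDistinct p) (hodd : Odd (maxPart p)) :
    p.parts.count (maxPart p) = 1 := by
  have parts_ne : p.parts ≠ 0 := by
    intro h
    simp [maxPart, h] at hodd
  exact le_antisymm (hp _ hodd) (Multiset.one_le_count_iff_mem.2 (multiset_sup_mem parts_ne))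

end Partition

theorem o1_eq_card_largest_odd : ∀ n : ℕ, 2 ≤ n →
    o1 (n - 1) =
      Nat.card {p : n.Partition // OddDistinct p ∧ Odd (maxPart p)} := by
  intro n hn
  obtain ⟨k, rfl⟩ : ∃ k, n = k + 1 := ⟨n - 1, by omega⟩
  have hk : k ≠ 0 := by omega
  have restricts (p : k.Partition) :
      OddDistinct p ∧ p.parts ≠ 0 ∧ Even (maxPart p) ↔
        OddDistinct (incrMaxPartEquiv hk p).1 ∧ Odd (maxPart (incrMaxPartEquiv hk p).1) := by
    rw [and_iff_right (parts_ne_zero hk p)]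
    exact oddDistinct_and_odd_maxPart_incrMaxPart_iff.symm
  exact Nat.card_congr <| ((incrMaxPartEquiv hk).subtypeEquiv restricts).trans <|
    Equiv.subtypeSubtypeEquivSubtype fun h => count_maxPart_eq_one h.1 h.2
end

section
/- For every integer n ≥ 1, d3(n+2) equals the number of partitions of n in which no even part is repeated and either the largest part is odd, or the largest part is even and the largest part minus 1 also occurs as a part. (The bijection subtracts 2 from the largest part of partitions counted by d3(n+2), which are of the forms (2j+1, 2j, h, ...) with h ≤ 2j-1, (2j+1, 2j-1, h, ...) with h ≤ 2j-1, or (2j+1, h, ...) with h < 2j-1.) -/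
/-- Number of partitions of n with no even part repeated, largest part odd,
and the largest part appearing exactly once. -/
noncomputable def d3 (n : ℕ) : ℕ :=
  Nat.card {p : n.Partition // EvenDistinct p ∧ Odd (maxPart p) ∧
    p.parts.count (maxPart p) = 1}

/-!
Both sides count the pairs consisting of an odd number `m` and a multiset `s` of positive integers
at most `m + 1`, without repeated even elements, such that `m + ∑ s = n`. Adjoining `m + 2` to `s`
makes `m + 2` the unrepeated largest part of a partition of `n + 2`. Adjoining `m` instead gives a
partition of `n` whose largest part is `m` or `m + 1`. Since `m` is odd, parity makes it recoverable
in both cases.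
-/

lemma multiset_sup_mem_s9 {α : Type*} [LinearOrder α] [OrderBot α] {s : Multiset α} (hs : s ≠ 0) :
    s.sup ∈ s := by
  obtain ⟨a, ha, hsup⟩ := s.toFinset.exists_mem_eq_sup (by simpa using hs) id
  have : s.sup = a := by simpa [Finset.sup_def] using hsup
  exact this ▸ Multiset.mem_toFinset.1 ha

lemma count_cons_of_odd_of_even {m i : ℕ} (hm : Odd m) (hi : Even i) (s : Multiset ℕ) :
    (m ::ₘ s).count i = s.count i :=
  Multiset.count_cons_of_ne (by rintro rfl; exact Nat.not_even_iff_odd.2 hm hi) s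

/-- A partition of `n` without repeated even parts, with a distinguished odd part `head` that no
other part exceeds by more than one; `rest` is the multiset of the other parts. It parametrises both
families of partitions to be compared, which arise by enlarging `head` by `2` or by `0`. -/
@[ext]
structure OddHeadSplit (n : ℕ) where
  head : ℕ
  rest : Multiset ℕ
  odd_head : Odd head
  rest_pos : ∀ x ∈ rest, 0 < x
  rest_le : ∀ x ∈ rest, x ≤ head + 1
  count_rest_le_one : ∀ i, Even i → rest.count i ≤ 1
  head_add_sum_rest : head + rest.sum = n

namespace OddHeadSplit

variable {n k : ℕ}

/-- The partition of `n + k` obtained by enlarging the distinguished part by `k`. -/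
def raise (k : ℕ) (q : OddHeadSplit n) : (n + k).Partition where
  parts := (q.head + k) ::ₘ q.rest
  parts_pos {i} hi := by
    rcases Multiset.mem_cons.1 hi with rfl | hi
    · exact Nat.add_pos_left q.odd_head.pos k
    · exact q.rest_pos i hi
  parts_sum := by
    rw [Multiset.sum_cons, add_right_comm, q.head_add_sum_rest]

lemma raise_injective (k : ℕ) : Function.Injective (raise k : OddHeadSplit n → _) := by
  intro q r h
  have hparts : (q.head + k) ::ₘ q.rest = (r.head + k) ::ₘ r.rest :=
    congrArg Nat.Partition.parts h
  rcases Multiset.cons_eq_cons.1 hparts with ⟨hhead, hrest⟩ | ⟨hne, t, hq, hr⟩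
  · exact OddHeadSplit.ext (Nat.add_right_cancel hhead) hrest
  · have hrq : r.head + k ≤ q.head + 1 := q.rest_le _ (by simp [hq])
    have hqr : q.head + k ≤ r.head + 1 := r.rest_le _ (by simp [hr])
    obtain ⟨a, ha⟩ := q.odd_head
    obtain ⟨b, hb⟩ := r.odd_head
    omega

lemma evenDistinct_raise (hk : Even k) (q : OddHeadSplit n) : EvenDistinct (q.raise k) :=
  fun i hi ↦ (count_cons_of_odd_of_even (q.odd_head.add_even hk) hi q.rest).trans_le
    (q.count_rest_le_one i hi)

lemma exists_raise_eq {m : ℕ} {p : (n + k).Partition} (hp : EvenDistinct p)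
    (hm : Odd m) (hmem : m + k ∈ p.parts) (hle : ∀ x ∈ p.parts.erase (m + k), x ≤ m + 1) :
    ∃ q : OddHeadSplit n, q.raise k = p := by
  have hcons : (m + k) ::ₘ p.parts.erase (m + k) = p.parts := Multiset.cons_erase hmem
  refine ⟨⟨m, p.parts.erase (m + k), hm, ?_, hle, ?_, ?_⟩, Nat.Partition.ext hcons⟩
  · exact fun x hx ↦ p.parts_pos (Multiset.mem_of_mem_erase hx)
  · exact fun i hi ↦ (Multiset.count_le_of_le i (Multiset.erase_le _ _)).trans (hp i hi)
  · have hsum : m + k + (p.parts.erase (m + k)).sum = n + k := by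
      rw [← Multiset.sum_cons, hcons, p.parts_sum]
    omega

lemma mem_range_raise_iff (hk : Even k) {p : (n + k).Partition} :
    p ∈ Set.range (raise k) ↔ EvenDistinct p ∧
      ∃ m, Odd m ∧ m + k ∈ p.parts ∧ ∀ x ∈ p.parts.erase (m + k), x ≤ m + 1 := by
  constructor
  · rintro ⟨q, rfl⟩
    exact ⟨q.evenDistinct_raise hk, q.head, q.odd_head, Multiset.mem_cons_self _ _,
      by simpa [raise] using q.rest_le⟩
  · rintro ⟨hp, m, hm, hmem, hle⟩
    exact exists_raise_eq hp hm hmem hle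

end OddHeadSplit

section MaxPart

variable {n : ℕ}

lemma le_maxPart {p : n.Partition} {x : ℕ} (hx : x ∈ p.parts) : x ≤ maxPart p :=
  Multiset.le_sup hx

lemma maxPart_mem {p : n.Partition} (h : maxPart p ≠ 0) : maxPart p ∈ p.parts :=
  multiset_sup_mem_s9 fun h0 ↦ h (by simp [maxPart, h0])

lemma maxPart_le_iff_of_mem {p : n.Partition} {m b : ℕ} (hm : m ∈ p.parts) (hmb : m ≤ b) :
    maxPart p ≤ b ↔ ∀ x ∈ p.parts.erase m, x ≤ b := by
  rw [maxPart, ← Multiset.cons_erase hm, Multiset.sup_cons, sup_le_iff, Multiset.sup_le,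
    Multiset.cons_erase hm]
  exact and_iff_right hmb

lemma count_maxPart_eq_one_iff (p : n.Partition) :
    p.parts.count (maxPart p) = 1 ↔
      maxPart p ∈ p.parts ∧ ∀ x ∈ p.parts.erase (maxPart p), x < maxPart p := by
  constructor
  · intro hcount
    refine ⟨Multiset.count_pos.1 (by omega), fun x hx ↦ ?_⟩
    refine (le_maxPart (Multiset.mem_of_mem_erase hx)).lt_of_ne ?_
    rintro rfl
    have hpos := Multiset.count_pos.2 hx
    rw [Multiset.count_erase_self] at hpos
    omega
  · rintro ⟨hmem, hlt⟩
    have hcount : (p.parts.erase (maxPart p)).count (maxPart p) = 0 :=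
      Multiset.count_eq_zero.2 fun h ↦ (hlt _ h).false
    have hpos := Multiset.count_pos.2 hmem
    rw [Multiset.count_erase_self] at hcount
    omega

lemma three_le_maxPart_of_count_eq_one {p : n.Partition} (hn : n ≠ 1) (hodd : Odd (maxPart p))
    (hcount : p.parts.count (maxPart p) = 1) : 3 ≤ maxPart p := by
  obtain ⟨hmem, hlt⟩ := (count_maxPart_eq_one_iff p).1 hcount
  have hne : maxPart p ≠ 1 := by
    intro h
    rw [h] at hmem hlt
    have hrest : p.parts.erase 1 = 0 := Multiset.eq_zero_of_forall_notMem fun x hx ↦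
      (p.parts_pos (Multiset.mem_of_mem_erase hx)).ne' (Nat.lt_one_iff.1 (hlt x hx))
    exact hn (by rw [← p.parts_sum, ← Multiset.cons_erase hmem, hrest]; rfl)
  obtain ⟨j, hj⟩ := hodd
  omega

lemma odd_maxPart_and_count_eq_one_iff (p : (n + 2).Partition) :
    Odd (maxPart p) ∧ p.parts.count (maxPart p) = 1 ↔
      ∃ m, Odd m ∧ m + 2 ∈ p.parts ∧ ∀ x ∈ p.parts.erase (m + 2), x ≤ m + 1 := by
  constructor
  · rintro ⟨hodd, hcount⟩
    have hthree : 3 ≤ maxPart p := three_le_maxPart_of_count_eq_one (by omega) hodd hcount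
    obtain ⟨m, hm⟩ := Nat.exists_eq_add_of_le' ((Nat.le_succ 2).trans hthree)
    obtain ⟨hmem, hlt⟩ := (count_maxPart_eq_one_iff p).1 hcount
    rw [hm] at hodd hmem hlt
    exact ⟨m, by simpa [parity_simps] using hodd, hmem, fun x hx ↦ Nat.lt_succ_iff.1 (hlt x hx)⟩
  · rintro ⟨m, hm, hmem, hle⟩
    have hmax : maxPart p = m + 2 := le_antisymm
      ((maxPart_le_iff_of_mem hmem le_rfl).2 fun x hx ↦ (hle x hx).trans (Nat.le_succ _))
      (le_maxPart hmem)
    rw [count_maxPart_eq_one_iff, hmax]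
    exact ⟨hm.add_even even_two, hmem, fun x hx ↦ Nat.lt_succ_of_le (hle x hx)⟩

lemma odd_maxPart_or_pred_mem_iff (p : n.Partition) :
    (Odd (maxPart p) ∨ (Even (maxPart p) ∧ maxPart p - 1 ∈ p.parts)) ↔
      ∃ m, Odd m ∧ m ∈ p.parts ∧ ∀ x ∈ p.parts.erase m, x ≤ m + 1 := by
  constructor
  · rintro (hodd | ⟨heven, hmem⟩)
    · have hmem := maxPart_mem hodd.pos.ne'
      exact ⟨_, hodd, hmem, (maxPart_le_iff_of_mem hmem (Nat.le_succ _)).1 (Nat.le_succ _)⟩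
    · have hpos : 1 ≤ maxPart p := (p.parts_pos hmem : 0 < _).trans_le (Nat.sub_le _ _)
      refine ⟨_, Nat.Even.sub_odd hpos heven odd_one, hmem, ?_⟩
      exact (maxPart_le_iff_of_mem hmem (Nat.le_succ _)).1 (Nat.sub_add_cancel hpos).ge
  · rintro ⟨m, hm, hmem, hle⟩
    have hmax_le : maxPart p ≤ m + 1 := (maxPart_le_iff_of_mem hmem (Nat.le_succ m)).2 hle
    rcases (le_maxPart hmem).eq_or_lt with hmax | hlt
    · exact .inl (hmax ▸ hm)
    · have hmax : maxPart p = m + 1 := le_antisymm hmax_le hlt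
      exact .inr (by simpa [hmax] using ⟨hm.add_one, hmem⟩)

end MaxPart

theorem d3_eq_card_odd_or_pred_mem : ∀ n : ℕ, 1 ≤ n →
    d3 (n + 2) =
      Nat.card {p : n.Partition // EvenDistinct p ∧
        (Odd (maxPart p) ∨ (Even (maxPart p) ∧ maxPart p - 1 ∈ p.parts))} := by
  intro n _
  have hrange_two (p : (n + 2).Partition) : (EvenDistinct p ∧ Odd (maxPart p) ∧
      p.parts.count (maxPart p) = 1) ↔ p ∈ Set.range (OddHeadSplit.raise 2) := by
    rw [OddHeadSplit.mem_range_raise_iff even_two, odd_maxPart_and_count_eq_one_iff]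
  have hrange_zero (p : n.Partition) : p ∈ Set.range (OddHeadSplit.raise 0) ↔ EvenDistinct p ∧
      (Odd (maxPart p) ∨ (Even (maxPart p) ∧ maxPart p - 1 ∈ p.parts)) := by
    rw [odd_maxPart_or_pred_mem_iff]
    exact OddHeadSplit.mem_range_raise_iff (n := n) Even.zero
  calc d3 (n + 2)
      = Nat.card (Set.range (OddHeadSplit.raise (n := n) 2)) :=
        Nat.card_congr (Equiv.subtypeEquivRight hrange_two)
    _ = Nat.card (OddHeadSplit n) :=
        Nat.card_range_of_injective (OddHeadSplit.raise_injective 2)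
    _ = Nat.card (Set.range (OddHeadSplit.raise (n := n) 0)) :=
        (Nat.card_range_of_injective (OddHeadSplit.raise_injective 0)).symm
    _ = _ := Nat.card_congr (Equiv.subtypeEquivRight hrange_zero)
end
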